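/- Let N ≥ 1 be an integer, let Ω ⊆ ℝ^N be a nonempty bounded open set, let p ∈ (1, +∞), let μ be a nonnegative, nontrivial (i.e. μ ≠ 0), finite Borel measure on (0,1), and let g : ℝ^N → ℝ be measurable. For a measurable function v : ℝ^N → ℝ set E(v) := ∫_Ω |v|^p dx + ∫_{ℝ^N ∖ Ω} |g| · |v|^p dx + (1/2) ∫_{(0,1)} ( c_{N,s,p} ∬_𝒬 |v(x) − v(y)|^p / |x−y|^{N+ps} dx dy ) dμ(s). Suppose {u_n} is a sequence of measurable functions u_n : ℝ^N → ℝ with E(u_n) < +∞ for every n, which is Cauchy for E, i.e. for every ε > 0 there exists K such that E(u_m − u_n) ≤ ε for all m, n ≥ K. Then there exist a subsequence {u_{n_k}} and a measurable function u : ℝ^N → ℝ such that u_{n_k}(x) → u(x) for almost every x ∈ ℝ^N. -/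

import Mathlib

open MeasureTheory Set Filter
open scoped ENNReal Topology

/-- The normalizing constant `c_{N,s,p}` of the fractional `p`-Laplacian. -/
noncomputable def cNsp (N : ℕ) (s p : ℝ) : ℝ :=
  s * (2 : ℝ) ^ (2 * s - 1) * Real.Gamma ((p * s + p + N - 2) / 2) /
    (Real.pi ^ ((N : ℝ) / 2) * Real.Gamma (1 - s))

/-- The energy `E(v)` built from the `L^p` norm on `Ω`, the weighted `L^p` norm on `ℝ^N ∖ Ω`
and the superposition of Gagliardo seminorms over `𝒬 = ℝ^{2N} ∖ (Ωᶜ × Ωᶜ)`. -/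
noncomputable def energyE (N : ℕ) (Ω : Set (EuclideanSpace ℝ (Fin N))) (p : ℝ)
    (μ : Measure ℝ) (g v : EuclideanSpace ℝ (Fin N) → ℝ) : ℝ≥0∞ :=
  (∫⁻ x in Ω, ENNReal.ofReal (|v x| ^ p)) +
    (∫⁻ x in Ωᶜ, ENNReal.ofReal (|g x| * |v x| ^ p)) +
    (1 / 2) * ∫⁻ s in Set.Ioo (0 : ℝ) 1,
        ENNReal.ofReal (cNsp N s p) *
          ∫⁻ z in ((Ωᶜ) ×ˢ (Ωᶜ))ᶜ,
            ENNReal.ofReal (|v z.1 - v z.2| ^ p / dist z.1 z.2 ^ ((N : ℝ) + p * s))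
            ∂(volume.prod volume) ∂μ

/-!
The weight `|x - y|^{-(N + ps)}` is bounded below by `(1 ∨ |x - y|)^{-(N + p)}` for every
`s ∈ (0, 1)`, and `s ↦ c_{N,s,p}` is positive there, so the energy controls both the `L^p` norm of
`v` on `Ω` and the `L^p` norm of `v(x) - v(y)` for a measure on `Ω × ℝ^N` with an everywhere
positive density. Along a rapidly Cauchy subsequence, `u_n(x)` converges for almost every `x ∈ Ω`
and `u_n(x) - u_n(y)` for almost every `(x, y) ∈ Ω × ℝ^N`. Since `Ω` has positive measure, Fubini
provides one `x ∈ Ω` that is good in both senses, and subtracting gives convergence of `u_n(y)` for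
almost every `y`.
-/

section AlmostEverywhereConvergence

variable {α β E : Type*} [MeasurableSpace α] [MeasurableSpace β]

theorem exists_strictMono_forall_lt_of_cauchy {D : ℕ → ℕ → ℝ≥0∞}
    (hD : ∀ ε : ℝ, 0 < ε → ∃ K, ∀ m, K ≤ m → ∀ n, K ≤ n → D m n ≤ ENNReal.ofReal ε)
    {B : ℕ → ℝ≥0∞} (hB : ∀ k, 0 < B k) :
    ∃ φ : ℕ → ℕ, StrictMono φ ∧ ∀ k m n, k ≤ m → k ≤ n → D (φ m) (φ n) < B k := by
  have small : ∀ k, ∃ K, ∀ L ≥ K, ∀ m ≥ L, ∀ n ≥ L, D m n < B k := by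
    intro k
    obtain ⟨ε, -, hε, hεB⟩ := ENNReal.lt_iff_exists_real_btwn.1 (hB k)
    obtain ⟨K, hK⟩ := hD ε (ENNReal.ofReal_pos.1 hε)
    exact ⟨K, fun L hL m hm n hn ↦ (hK m (hL.trans hm) n (hL.trans hn)).trans_lt hεB⟩
  obtain ⟨φ, hφ, hφB⟩ := extraction_forall_of_eventually' small
  exact ⟨φ, hφ, fun k m n hm hn ↦ hφB k _ (hφ.monotone hm) _ (hφ.monotone hn)⟩

theorem ae_exists_tendsto_of_lintegral_enorm_rpow_lt [NormedAddCommGroup E] [CompleteSpace E]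
    {ν : Measure α} {f : ℕ → α → E} (hf : ∀ n, AEStronglyMeasurable (f n) ν)
    {p : ℝ} (hp : 1 ≤ p) {B : ℕ → ℝ≥0∞} (hB : ∑' k, B k ≠ ∞)
    (hfB : ∀ k m n, k ≤ m → k ≤ n → ∫⁻ x, ‖f m x - f n x‖ₑ ^ p ∂ν < B k ^ p) :
    ∀ᵐ x ∂ν, ∃ a, Tendsto (fun n ↦ f n x) atTop (𝓝 a) := by
  have hp0 : 0 < p := one_pos.trans_le hp
  refine Lp.ae_tendsto_of_cauchy_eLpNorm' hf hp hB fun k m n hm hn ↦ ?_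
  rw [← ENNReal.rpow_lt_rpow_iff hp0, ← lintegral_rpow_enorm_eq_rpow_eLpNorm' hp0]
  exact hfB k m n hm hn

theorem ae_exists_tendsto_of_ae_prod_sub [TopologicalSpace E] [AddCommGroup E]
    [IsTopologicalAddGroup E] {ι : Type*} {l : Filter ι} {ν : Measure α} [NeZero ν]
    {ρ : Measure β} [SFinite ρ] {f : ι → α → E} {g : ι → β → E}
    (hf : ∀ᵐ x ∂ν, ∃ a, Tendsto (fun i ↦ f i x) l (𝓝 a))
    (hfg : ∀ᵐ z ∂ν.prod ρ, ∃ b, Tendsto (fun i ↦ f i z.1 - g i z.2) l (𝓝 b)) :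
    ∀ᵐ y ∂ρ, ∃ c, Tendsto (fun i ↦ g i y) l (𝓝 c) := by
  obtain ⟨x, ⟨a, hfx⟩, hx⟩ := (hf.and (Measure.ae_ae_of_ae_prod hfg)).exists
  filter_upwards [hx] with y ⟨b, hfgxy⟩
  exact ⟨a - b, (hfx.sub hfgxy).congr fun i ↦ sub_sub_cancel _ _⟩

end AlmostEverywhereConvergence

section NormalizingConstant

variable {N : ℕ} {p : ℝ}

theorem cNsp_Gamma_arg_pos (hp : 0 < p) (hNp : 2 ≤ N + p) {s : ℝ} (hs : 0 < s) :
    0 < (p * s + p + N - 2) / 2 := by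
  linarith [mul_pos hp hs]

theorem cNsp_pos (hp : 0 < p) (hNp : 2 ≤ N + p) {s : ℝ} (hs : s ∈ Ioo (0 : ℝ) 1) :
    0 < cNsp N s p := by
  have hs0 := hs.1
  have hGamma_num := Real.Gamma_pos_of_pos (cNsp_Gamma_arg_pos hp hNp hs0)
  have hGamma_den := Real.Gamma_pos_of_pos (sub_pos.2 hs.2)
  unfold cNsp
  positivity

theorem continuousOn_cNsp (hp : 0 < p) (hNp : 2 ≤ N + p) :
    ContinuousOn (fun s ↦ cNsp N s p) (Ioo 0 1) := by
  have hGamma : ContinuousOn Real.Gamma (Ioi 0) := fun t ht ↦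
    (Real.differentiableAt_Gamma fun m ↦
      ((neg_nonpos.2 m.cast_nonneg).trans_lt ht).ne').continuousAt.continuousWithinAt
  have hnum : ContinuousOn (fun s ↦ Real.Gamma ((p * s + p + N - 2) / 2)) (Ioo 0 1) :=
    hGamma.comp (by fun_prop) fun s hs ↦ cNsp_Gamma_arg_pos hp hNp hs.1
  have hden : ContinuousOn (fun s ↦ Real.Gamma (1 - s)) (Ioo 0 1) :=
    hGamma.comp (by fun_prop) fun s hs ↦ sub_pos.2 hs.2
  have hpow : Continuous fun s : ℝ ↦ (2 : ℝ) ^ (2 * s - 1) :=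
    (Real.continuous_const_rpow two_ne_zero).comp (by fun_prop)
  refine ((continuousOn_id.mul hpow.continuousOn).mul hnum).div
    (continuousOn_const.mul hden) fun s hs ↦ ?_
  have := Real.Gamma_pos_of_pos (sub_pos.2 hs.2)
  positivity

theorem setLIntegral_cNsp_ne_zero (hp : 0 < p) (hNp : 2 ≤ N + p) {μ : Measure ℝ}
    (hμ : μ (Ioo 0 1) ≠ 0) : ∫⁻ s in Ioo (0 : ℝ) 1, ENNReal.ofReal (cNsp N s p) ∂μ ≠ 0 := by
  intro hzero
  have hmeas := ((continuousOn_cNsp hp hNp).aemeasurable measurableSet_Ioo (μ := μ)).ennreal_ofReal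
  rw [lintegral_eq_zero_iff' hmeas, EventuallyEq, ae_restrict_iff' measurableSet_Ioo] at hzero
  refine hμ (measure_eq_zero_iff_ae_notMem.2 ?_)
  filter_upwards [hzero] with s hs_zero hs
  exact (ENNReal.ofReal_pos.2 (cNsp_pos hp hNp hs)).ne' (hs_zero hs)

end NormalizingConstant

section Energy

theorem rpow_le_max_one_rpow {d a b : ℝ} (hd : 0 ≤ d) (ha : 0 ≤ a) (hab : a ≤ b) :
    d ^ a ≤ max 1 d ^ b :=
  calc d ^ a ≤ max 1 d ^ a := Real.rpow_le_rpow hd (le_max_right 1 d) ha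
    _ ≤ max 1 d ^ b := Real.rpow_le_rpow_of_exponent_le (le_max_left 1 d) hab

-- At `d = 0 < a` the right-hand side is `0` by division by zero, hence `ht`.
theorem ofReal_max_one_rpow_neg_mul_enorm_rpow_le {t d p a b : ℝ} (hp : 0 < p) (ha : 0 ≤ a)
    (hab : a ≤ b) (hd : 0 ≤ d) (ht : d = 0 → t = 0) :
    ENNReal.ofReal (max 1 d ^ (-b)) * ‖t‖ₑ ^ p ≤ ENNReal.ofReal (|t| ^ p / d ^ a) := by
  rcases hd.eq_or_lt' with hd0 | hd0
  · simp [ht hd0, hp]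
  rw [Real.enorm_eq_ofReal_abs, ENNReal.ofReal_rpow_of_nonneg (abs_nonneg t) hp.le,
    ← ENNReal.ofReal_mul (by positivity), Real.rpow_neg (by positivity), mul_comm,
    ← div_eq_mul_inv]
  gcongr
  exact rpow_le_max_one_rpow hd ha hab

variable {N : ℕ} {Ω : Set (EuclideanSpace ℝ (Fin N))} {p : ℝ} {μ : Measure ℝ}

/-- The measure `C (1 ∨ |x - y|)^{-(N + p)} dx dy` on `Ω × ℝ^N`, where
`C = (1/2) ∫_{(0,1)} c_{N,s,p} dμ(s)`. It is a lower bound for the measure against which the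
nonlocal term of `energyE` integrates `|v(x) - v(y)|^p`. -/
noncomputable def comparisonMeasure (N : ℕ) (Ω : Set (EuclideanSpace ℝ (Fin N))) (p : ℝ)
    (μ : Measure ℝ) : Measure (EuclideanSpace ℝ (Fin N) × EuclideanSpace ℝ (Fin N)) :=
  ((1 / 2) * ∫⁻ s in Ioo (0 : ℝ) 1, ENNReal.ofReal (cNsp N s p) ∂μ) •
    ((volume.restrict Ω).prod volume).withDensity fun z ↦
      ENNReal.ofReal (max 1 (dist z.1 z.2) ^ (-(N + p)))

theorem comparisonMeasure_absolutelyContinuous :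
    comparisonMeasure N Ω p μ ≪ (volume.restrict Ω).prod volume :=
  Measure.smul_absolutelyContinuous.trans (withDensity_absolutelyContinuous _ _)

theorem absolutelyContinuous_comparisonMeasure (hp : 0 < p) (hNp : 2 ≤ N + p)
    (hμ : μ (Ioo 0 1) ≠ 0) :
    (volume.restrict Ω).prod volume ≪ comparisonMeasure N Ω p μ := by
  refine (withDensity_absolutelyContinuous' (by fun_prop) (ae_of_all _ fun z ↦ ?_)).smul_right
    (mul_ne_zero (by simp) (setLIntegral_cNsp_ne_zero hp hNp hμ))
  exact (ENNReal.ofReal_pos.2 (by positivity)).ne'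

theorem setLIntegral_enorm_rpow_le_energyE (hp : 0 ≤ p) (g v : EuclideanSpace ℝ (Fin N) → ℝ) :
    ∫⁻ x in Ω, ‖v x‖ₑ ^ p ≤ energyE N Ω p μ g v := by
  simp only [Real.enorm_eq_ofReal_abs, ENNReal.ofReal_rpow_of_nonneg (abs_nonneg _) hp]
  exact le_self_add.trans le_self_add

theorem lintegral_withDensity_enorm_rpow_le (hp : 0 < p) {s : ℝ} (hs : s ∈ Ioo (0 : ℝ) 1)
    (v : EuclideanSpace ℝ (Fin N) → ℝ) :
    ∫⁻ z, ‖v z.1 - v z.2‖ₑ ^ p ∂((volume.restrict Ω).prod volume).withDensity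
        (fun z ↦ ENNReal.ofReal (max 1 (dist z.1 z.2) ^ (-(N + p)))) ≤
      ∫⁻ z in (Ωᶜ ×ˢ Ωᶜ)ᶜ, ENNReal.ofReal (|v z.1 - v z.2| ^ p / dist z.1 z.2 ^ (N + p * s))
        ∂(volume.prod volume) := by
  have hps : 0 < p * s := mul_pos hp hs.1
  have hps_le : p * s ≤ p := mul_le_of_le_one_right hp.le hs.2.le
  have hrestrict : (volume.restrict Ω).prod volume =
      (volume.prod volume).restrict (Ω ×ˢ (univ : Set (EuclideanSpace ℝ (Fin N)))) := by
    rw [← Measure.prod_restrict, Measure.restrict_univ]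
  have hsubset : Ω ×ˢ univ ⊆ (Ωᶜ ×ˢ Ωᶜ)ᶜ := fun z hz hz' ↦ hz'.1 hz.1
  refine (lintegral_withDensity_le_lintegral_mul _ (by fun_prop) _).trans ?_
  rw [hrestrict]
  refine (lintegral_mono fun z ↦ ?_).trans (lintegral_mono_set hsubset)
  refine ofReal_max_one_rpow_neg_mul_enorm_rpow_le hp (by positivity) (by gcongr) dist_nonneg ?_
  intro hz
  rw [dist_eq_zero.1 hz, sub_self]

theorem lintegral_comparisonMeasure_le_energyE (hp : 0 < p)
    (g v : EuclideanSpace ℝ (Fin N) → ℝ) :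
    ∫⁻ z, ‖v z.1 - v z.2‖ₑ ^ p ∂comparisonMeasure N Ω p μ ≤ energyE N Ω p μ g v := by
  rw [comparisonMeasure, lintegral_smul_measure, smul_eq_mul, mul_assoc]
  refine le_trans ?_ le_add_self
  gcongr
  refine (lintegral_mul_const_le _ _).trans (setLIntegral_mono' measurableSet_Ioo fun s hs ↦ ?_)
  refine mul_le_mul_right ?_ _
  exact lintegral_withDensity_enorm_rpow_le hp hs v

end Energy

theorem statement4_general {N : ℕ} (hN : 1 ≤ N)
    {Ω : Set (EuclideanSpace ℝ (Fin N))} (hΩ : volume Ω ≠ 0) {p : ℝ} (hp : 1 ≤ p)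
    {μ : Measure ℝ} (hμ : μ (Ioo 0 1) ≠ 0) {g : EuclideanSpace ℝ (Fin N) → ℝ}
    {u : ℕ → EuclideanSpace ℝ (Fin N) → ℝ} (hu : ∀ n, AEMeasurable (u n))
    (hcauchy : ∀ ε : ℝ, 0 < ε → ∃ K : ℕ, ∀ m, K ≤ m → ∀ n, K ≤ n →
      energyE N Ω p μ g (fun x ↦ u m x - u n x) ≤ ENNReal.ofReal ε) :
    ∃ φ : ℕ → ℕ, StrictMono φ ∧
      ∃ v : EuclideanSpace ℝ (Fin N) → ℝ, Measurable v ∧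
        ∀ᵐ x, Tendsto (fun k ↦ u (φ k) x) atTop (𝓝 (v x)) := by
  have hp0 : 0 < p := one_pos.trans_le hp
  have hNp : 2 ≤ N + p := by linarith [(Nat.one_le_cast (α := ℝ)).2 hN]
  obtain ⟨B, hB, hBsum⟩ := ENNReal.exists_pos_sum_of_countable' one_ne_zero ℕ
  have hBsum_ne : ∑' k, B k ≠ ∞ := hBsum.ne_top
  obtain ⟨φ, hφ, hφB⟩ := exists_strictMono_forall_lt_of_cauchy hcauchy
    fun k ↦ ENNReal.rpow_pos_of_nonneg (p := p) (hB k) hp0.le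
  have conv_Ω : ∀ᵐ x ∂volume.restrict Ω, ∃ a, Tendsto (fun k ↦ u (φ k) x) atTop (𝓝 a) :=
    ae_exists_tendsto_of_lintegral_enorm_rpow_lt
      (fun k ↦ (hu (φ k)).restrict.aestronglyMeasurable) hp hBsum_ne fun k m n hm hn ↦
      (setLIntegral_enorm_rpow_le_energyE hp0.le g _).trans_lt (hφB k m n hm hn)
  have conv_sub : ∀ᵐ z ∂comparisonMeasure N Ω p μ,
      ∃ b, Tendsto (fun k ↦ u (φ k) z.1 - u (φ k) z.2) atTop (𝓝 b) := by
    refine ae_exists_tendsto_of_lintegral_enorm_rpow_lt (fun k ↦ ?_) hp hBsum_ne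
      fun k m n hm hn ↦ ?_
    · exact ((hu (φ k)).restrict.comp_fst.sub (hu (φ k)).comp_snd).aestronglyMeasurable.mono_ac
        comparisonMeasure_absolutelyContinuous
    · simp only [sub_sub_sub_comm _ (u (φ m) _)]
      exact (lintegral_comparisonMeasure_le_energyE hp0 g _).trans_lt (hφB k m n hm hn)
  have : NeZero (volume.restrict Ω) := ⟨mt Measure.restrict_eq_zero.1 hΩ⟩
  have conv := ae_exists_tendsto_of_ae_prod_sub conv_Ω
    ((absolutelyContinuous_comparisonMeasure hp0 hNp hμ).ae_le conv_sub)
  exact ⟨φ, hφ, measurable_limit_of_tendsto_metrizable_ae (fun k ↦ hu (φ k)) conv⟩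

theorem statement4 (N : ℕ) (hN : 1 ≤ N)
    (Ω : Set (EuclideanSpace ℝ (Fin N))) (hΩ : IsOpen Ω) (hne : Ω.Nonempty)
    (hbd : Bornology.IsBounded Ω)
    (p : ℝ) (hp : 1 < p)
    (μ : Measure ℝ) [IsFiniteMeasure μ] (hμ : μ ≠ 0)
    (hsupp : μ ((Set.Ioo (0 : ℝ) 1)ᶜ) = 0)
    (g : EuclideanSpace ℝ (Fin N) → ℝ) (hg : Measurable g)
    (u : ℕ → EuclideanSpace ℝ (Fin N) → ℝ) (hu : ∀ n, Measurable (u n))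
    (hfin : ∀ n, energyE N Ω p μ g (u n) < ⊤)
    (hcauchy : ∀ ε : ℝ, 0 < ε → ∃ K : ℕ, ∀ m, K ≤ m → ∀ n, K ≤ n →
      energyE N Ω p μ g (fun x => u m x - u n x) ≤ ENNReal.ofReal ε) :
    ∃ φ : ℕ → ℕ, StrictMono φ ∧
      ∃ v : EuclideanSpace ℝ (Fin N) → ℝ, Measurable v ∧
        ∀ᵐ x ∂(volume : Measure (EuclideanSpace ℝ (Fin N))),
          Tendsto (fun k => u (φ k) x) atTop (𝓝 (v x)) := by
  have hμ' : μ (Ioo 0 1) ≠ 0 :=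
    (measure_congr (ae_eq_univ.2 hsupp)).trans_ne (Measure.measure_univ_ne_zero.2 hμ)
  exact statement4_general hN (hΩ.measure_pos volume hne).ne' hp.le hμ'
    (fun n ↦ (hu n).aemeasurable) hcauchy
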